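/- arXiv:1102.0659 — 10 statements merged into one kernel-verified Lean document; each statement's English description precedes it below -/
import Mathlib

section
/- Let n be a natural number and let (u_k), (v_k), (w_k) be sequences of complex numbers with u_k − v_k = w_k for all k, such that w_0 ≠ 0 and v_k ≠ 0 for 1 ≤ k ≤ n. Then ∑_{k=0}^{n} (w_k / w_0) · (u_0 u_1 ⋯ u_{k−1}) / (v_1 v_2 ⋯ v_k) = (1 / w_0) · (u_0 u_1 ⋯ u_n / (v_1 ⋯ v_n) − v_0), where empty products are taken to be 1. -/
/-- Euler's Telescoping Lemma: if `u k - v k = w k` for all `k`, `w 0 ≠ 0`, and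
`v k ≠ 0` for `1 ≤ k ≤ n`, then
`∑_{k=0}^{n} (w_k/w_0)·(u_0⋯u_{k−1})/(v_1⋯v_k) = (1/w_0)·(u_0⋯u_n/(v_1⋯v_n) − v_0)`. -/
theorem euler_telescoping_lemma (n : ℕ) (u v w : ℕ → ℂ)
    (huvw : ∀ k, u k - v k = w k) (hw0 : w 0 ≠ 0)
    (hv : ∀ k, 1 ≤ k → k ≤ n → v k ≠ 0) :
    ∑ k ∈ Finset.range (n + 1),
      (w k / w 0) * (∏ j ∈ Finset.range k, u j) / (∏ j ∈ Finset.Icc 1 k, v j)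
      = (1 / w 0) *
        ((∏ j ∈ Finset.range (n + 1), u j) / (∏ j ∈ Finset.Icc 1 n, v j) - v 0) := by
  induction n with
  | zero => simp [huvw, div_self hw0, inv_mul_cancel₀ hw0]
  | succ n ih =>
    have hP : (∏ j ∈ Finset.Icc 1 n, v j) ≠ 0 := by
      refine Finset.prod_ne_zero_iff.mpr fun j hj => ?_
      rw [Finset.mem_Icc] at hj
      exact hv j hj.1 (by omega)
    have hvn : v (n + 1) ≠ 0 := hv (n + 1) (by omega) le_rfl
    rw [Finset.sum_range_succ, ih fun k h1 h2 => hv k h1 (by omega),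
      Finset.prod_Icc_succ_top (by omega : 1 ≤ n + 1),
      Finset.prod_range_succ u (n + 1), ← huvw (n + 1)]
    generalize (∏ j ∈ Finset.range (n + 1), u j) = U
    field_simp
    ring
end

section
/- Let n be a natural number, let x be a nonzero complex number, and let (a_k)_{k≥1} be a sequence of complex numbers with x + a_k ≠ 0 for 1 ≤ k ≤ n+1. Then ∑_{k=0}^{n} (a_1 a_2 ⋯ a_k) / ((x+a_1)(x+a_2) ⋯ (x+a_{k+1})) = 1/x − (a_1 a_2 ⋯ a_{n+1}) / (x (x+a_1)(x+a_2) ⋯ (x+a_{n+1})), where the empty product a_1 ⋯ a_0 is 1. -/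
/-- Ramanujan's identity (Entry 25, Chapter 4 of Ramanujan's Notebooks):
`∑_{k=0}^{n} (a_1⋯a_k)/((x+a_1)⋯(x+a_{k+1})) = 1/x − (a_1⋯a_{n+1})/(x(x+a_1)⋯(x+a_{n+1}))`. -/
theorem ramanujan_identity (n : ℕ) (x : ℂ) (hx : x ≠ 0) (a : ℕ → ℂ)
    (ha : ∀ k, 1 ≤ k → k ≤ n + 1 → x + a k ≠ 0) :
    ∑ k ∈ Finset.range (n + 1),
      (∏ j ∈ Finset.Icc 1 k, a j) / (∏ j ∈ Finset.Icc 1 (k + 1), (x + a j))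
      = 1 / x -
        (∏ j ∈ Finset.Icc 1 (n + 1), a j) /
          (x * ∏ j ∈ Finset.Icc 1 (n + 1), (x + a j)) := by
  induction n with
  | zero =>
    have h1 := ha 1 le_rfl le_rfl
    simp
    field_simp
    ring
  | succ m ih =>
    rw [Finset.sum_range_succ, ih (fun k h1 h2 => ha k h1 (by omega))]
    have hP : ∏ j ∈ Finset.Icc 1 (m + 1), (x + a j) ≠ 0 := by
      rw [Finset.prod_ne_zero_iff]
      intro j hj
      rw [Finset.mem_Icc] at hj
      exact ha j hj.1 (by omega)
    have hl := ha (m + 1 + 1) (by omega) le_rfl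
    rw [Finset.prod_Icc_succ_top (show 1 ≤ m + 1 + 1 by omega) (fun j => x + a j),
      Finset.prod_Icc_succ_top (show 1 ≤ m + 1 + 1 by omega) a]
    generalize ∏ j ∈ Finset.Icc 1 (m + 1), (x + a j) = P at *
    generalize ∏ j ∈ Finset.Icc 1 (m + 1), a j = A at *
    field_simp
    ring
end

section
/- Let n be a natural number and let a, b be complex numbers such that (b)_k ≠ 0 for 0 ≤ k ≤ n and (b)_n ≠ 0. Then ∑_{k=0}^{n} ((a)_k (−n)_k) / ((b)_k k!) = (b−a)_n / (b)_n. -/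
/-- The rising factorial `(x)_m = x(x+1)⋯(x+m−1)`, with `(x)_0 = 1`. -/
def risingFactorial (x : ℂ) (m : ℕ) : ℂ := ∏ i ∈ Finset.range m, (x + i)

lemma rf_succ (x : ℂ) (m : ℕ) :
    risingFactorial x (m + 1) = risingFactorial x m * (x + m) := by
  simp [risingFactorial, Finset.prod_range_succ]

lemma rf_succ' (x : ℂ) (m : ℕ) :
    risingFactorial x (m + 1) = x * risingFactorial (x + 1) m := by
  unfold risingFactorial
  rw [Finset.prod_range_succ', mul_comm]
  congr 1
  · simp
  · apply Finset.prod_congr rfl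
    intro i _
    push_cast
    ring

lemma rf_neg (n k : ℕ) :
    risingFactorial (-(n : ℂ)) k = (-1) ^ k * (n.choose k : ℂ) * (k.factorial : ℂ) := by
  induction k with
  | zero => simp [risingFactorial]
  | succ k ih =>
    have h : (n.choose (k + 1) : ℂ) * (k + 1) = n.choose k * ((n : ℂ) - k) := by
      rcases le_or_gt k n with hk | hk
      · have := Nat.choose_succ_right_eq n k
        rw [← Nat.cast_sub hk]
        exact_mod_cast this
      · rw [Nat.choose_eq_zero_of_lt hk, Nat.choose_eq_zero_of_lt (by omega)]
        simp
    rw [rf_succ, ih, Nat.factorial_succ]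
    push_cast
    linear_combination ((-1) ^ k * (k.factorial : ℂ)) * h

lemma pascal_sum (n : ℕ) (f : ℕ → ℂ) :
    ∑ k ∈ Finset.range (n + 2), (-1) ^ k * ((n + 1).choose k : ℂ) * f k
      = ∑ k ∈ Finset.range (n + 1), (-1) ^ k * (n.choose k : ℂ) * f k
        - ∑ k ∈ Finset.range (n + 1), (-1) ^ k * (n.choose k : ℂ) * f (k + 1) := by
  have h1 : ∑ k ∈ Finset.range (n + 1), (-1) ^ k * (n.choose k : ℂ) * f k
      = ∑ k ∈ Finset.range (n + 2), (-1) ^ k * (n.choose k : ℂ) * f k := by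
    rw [Finset.sum_range_succ _ (n + 1)]
    simp
  rw [h1, Finset.sum_range_succ', Finset.sum_range_succ' _ (n + 1), add_sub_right_comm,
    ← Finset.sum_sub_distrib]
  congr 1
  · apply Finset.sum_congr rfl
    intro k _
    rw [Nat.choose_succ_succ]
    push_cast
    ring
  · simp

lemma chu_aux (n : ℕ) : ∀ (a b : ℂ), (∀ k ≤ n, risingFactorial b k ≠ 0) →
    ∑ k ∈ Finset.range (n + 1),
      (-1) ^ k * (n.choose k : ℂ) * (risingFactorial a k / risingFactorial b k)
      = risingFactorial (b - a) n / risingFactorial b n := by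
  induction n with
  | zero => intro a b _; simp [risingFactorial]
  | succ n ih =>
    intro a b hb
    have hb1 : ∀ k ≤ n, b * risingFactorial (b + 1) k ≠ 0 := by
      intro k hk
      rw [← rf_succ']
      exact hb _ (by omega)
    have hb0 : b ≠ 0 := left_ne_zero_of_mul (hb1 n le_rfl)
    have h2 := right_ne_zero_of_mul (hb1 n le_rfl)
    have h3 := hb n (by omega)
    have h4 := hb (n + 1) le_rfl
    have e := rf_succ' b n
    have e' := rf_succ b n
    have hs : ∑ k ∈ Finset.range (n + 1), (-1) ^ k * (n.choose k : ℂ) *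
        (risingFactorial a (k + 1) / risingFactorial b (k + 1))
        = a / b * (risingFactorial (b - a) n / risingFactorial (b + 1) n) := by
      have := ih (a + 1) (b + 1) (fun k hk => right_ne_zero_of_mul (hb1 k hk))
      rw [add_sub_add_right_eq_sub] at this
      rw [← this, Finset.mul_sum]
      apply Finset.sum_congr rfl
      intro k _
      rw [rf_succ', rf_succ', mul_div_mul_comm]
      ring
    rw [pascal_sum n (fun k => risingFactorial a k / risingFactorial b k), hs,
      ih a b (fun k hk => hb k (by omega)), rf_succ (b - a)]
    have hbn : b + n ≠ 0 := by rw [e'] at h4; exact right_ne_zero_of_mul h4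
    have x1 : risingFactorial (b - a) n / risingFactorial b n
        = risingFactorial (b - a) n * (b + n) / risingFactorial b (n + 1) := by
      rw [e', mul_div_mul_right _ _ hbn]
    have x2 : a / b * (risingFactorial (b - a) n / risingFactorial (b + 1) n)
        = a * risingFactorial (b - a) n / risingFactorial b (n + 1) := by
      rw [e, mul_div_mul_comm]
    rw [x1, x2]
    ring

/-- The Chu–Vandermonde sum:
`∑_{k=0}^{n} (a)_k (−n)_k / ((b)_k k!) = (b−a)_n / (b)_n`. -/
theorem chu_vandermonde (n : ℕ) (a b : ℂ)
    (hb : ∀ k ≤ n, risingFactorial b k ≠ 0) :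
    ∑ k ∈ Finset.range (n + 1),
      (risingFactorial a k * risingFactorial (-(n : ℂ)) k) /
        (risingFactorial b k * (k.factorial : ℂ))
      = risingFactorial (b - a) n / risingFactorial b n := by
  rw [← chu_aux n a b hb]
  apply Finset.sum_congr rfl
  intro k _
  have hk : (k.factorial : ℂ) ≠ 0 := by exact_mod_cast k.factorial_ne_zero
  rw [rf_neg, mul_div_mul_comm, mul_div_cancel_right₀ _ hk, mul_comm]
end

section
/- Let n be a natural number and let q, z be complex numbers such that (q;q)_k ≠ 0 for 0 ≤ k ≤ n. Then ∑_{k=0}^{n} ((q^{−n};q)_k / (q;q)_k) · (z q^n)^k = (z;q)_n. -/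
/-- The q-shifted factorial `(a;q)_m = (1−a)(1−aq)⋯(1−a q^{m−1})`, with `(a;q)_0 = 1`. -/
def qShiftedFactorial (a q : ℂ) (m : ℕ) : ℂ := ∏ i ∈ Finset.range m, (1 - a * q ^ i)

/-- Auxiliary product `∏_{i<k} (q^n - q^i)`. -/
def qbAux (q : ℂ) (n k : ℕ) : ℂ := ∏ i ∈ Finset.range k, (q ^ n - q ^ i)

theorem qbAux_eq (q : ℂ) (hq : q ≠ 0) (n k : ℕ) :
    qShiftedFactorial (q ^ (-(n : ℤ))) q k * (q ^ n) ^ k = qbAux q n k := by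
  unfold qShiftedFactorial qbAux
  rw [← Finset.card_range k, ← Finset.prod_const, Finset.card_range, ← Finset.prod_mul_distrib]
  refine Finset.prod_congr rfl fun i _ => ?_
  rw [zpow_neg, zpow_natCast]
  have := pow_ne_zero n hq
  field_simp

theorem qbAux_succ (q : ℂ) (n k : ℕ) :
    qbAux q n (k + 1) = qbAux q n k * (q ^ n - q ^ k) := Finset.prod_range_succ _ _

theorem qbAux_succ_succ (q : ℂ) (n k : ℕ) :
    qbAux q (n + 1) (k + 1) = (q ^ (n + 1) - 1) * q ^ k * qbAux q n k := by
  induction k with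
  | zero => simp [qbAux]
  | succ k ih => rw [qbAux_succ, ih, qbAux_succ]; ring

theorem qb_sum (q z : ℂ) (n : ℕ) (hqq : ∀ k ≤ n, qShiftedFactorial q q k ≠ 0) :
    ∑ k ∈ Finset.range (n + 1), qbAux q n k / qShiftedFactorial q q k * z ^ k
      = qShiftedFactorial z q n := by
  induction n with
  | zero => simp [qbAux, qShiftedFactorial]
  | succ n ih =>
    have ih' := ih fun k hk => hqq k (by omega)
    have hz : qShiftedFactorial z q (n + 1) = qShiftedFactorial z q n * (1 - z * q ^ n) :=
      Finset.prod_range_succ _ _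
    have h0 : ∑ k ∈ Finset.range (n + 1 + 1), qbAux q n k / qShiftedFactorial q q k * z ^ k
        = qShiftedFactorial z q n := by
      rw [Finset.sum_range_succ, ih', qbAux_succ]; simp
    rw [Finset.sum_range_succ'] at h0 ⊢
    have hstep : ∀ k ∈ Finset.range (n + 1),
        qbAux q (n + 1) (k + 1) / qShiftedFactorial q q (k + 1) * z ^ (k + 1)
        = qbAux q n (k + 1) / qShiftedFactorial q q (k + 1) * z ^ (k + 1)
          - z * q ^ n * (qbAux q n k / qShiftedFactorial q q k * z ^ k) := by
      intro k hk
      have hk' := Finset.mem_range.1 hk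
      have h1 := hqq (k + 1) (by omega)
      have hs : qShiftedFactorial q q (k + 1) = qShiftedFactorial q q k * (1 - q * q ^ k) :=
        Finset.prod_range_succ _ _
      rw [hs] at h1
      have h2 := left_ne_zero_of_mul h1
      have h3 := right_ne_zero_of_mul h1
      rw [qbAux_succ_succ, qbAux_succ, hs, pow_succ q n, pow_succ z k]
      generalize q ^ k = x at *
      generalize q ^ n = y at *
      field_simp
      ring
    rw [Finset.sum_congr rfl hstep, Finset.sum_sub_distrib, ← Finset.mul_sum, ih', hz]
    have e : qbAux q (n + 1) 0 = qbAux q n 0 := by simp [qbAux]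
    rw [e]
    linear_combination h0

/-- The terminating q-binomial theorem:
`∑_{k=0}^{n} ((q^{−n};q)_k / (q;q)_k) · (z q^n)^k = (z;q)_n`. -/
theorem q_binomial_theorem (n : ℕ) (q z : ℂ) (hq : q ≠ 0)
    (hqq : ∀ k ≤ n, qShiftedFactorial q q k ≠ 0) :
    ∑ k ∈ Finset.range (n + 1),
      (qShiftedFactorial (q ^ (-(n : ℤ))) q k / qShiftedFactorial q q k) *
        (z * q ^ n) ^ k
      = qShiftedFactorial z q n := by
  rw [← qb_sum q z n hqq]
  refine Finset.sum_congr rfl fun k _ => ?_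
  rw [← qbAux_eq q hq, mul_pow]
  ring
end

section
/- Let n be a natural number and let q, a, b be complex numbers with a ≠ 0, q ≠ 0, such that (b;q)_k ≠ 0 and (q;q)_k ≠ 0 for 0 ≤ k ≤ n, and (b;q)_n ≠ 0. Then ∑_{k=0}^{n} ((a;q)_k (q^{−n};q)_k) / ((b;q)_k (q;q)_k) · (b q^n / a)^k = (b/a;q)_n / (b;q)_n. -/
def qcvP (q : ℂ) (n k : ℕ) : ℂ := ∏ i ∈ Finset.range k, (q ^ n - q ^ i)

theorem qcvP_shift (q : ℂ) (n k : ℕ) :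
    qcvP q (n + 1) (k + 1) = (q ^ (n + 1) - 1) * q ^ k * qcvP q n k := by
  unfold qcvP
  rw [Finset.prod_range_succ', pow_zero]
  have h : ∀ i ∈ Finset.range k, (q ^ (n + 1) - q ^ (i + 1)) = q * (q ^ n - q ^ i) := by
    intro i _
    ring
  rw [Finset.prod_congr rfl h, Finset.prod_mul_distrib, Finset.prod_const, Finset.card_range]
  ring

theorem qcvP_succ (q : ℂ) (n k : ℕ) :
    qcvP q n (k + 1) = qcvP q n k * (q ^ n - q ^ k) := by
  unfold qcvP
  rw [Finset.prod_range_succ]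

theorem qcv_eq (q : ℂ) (hq : q ≠ 0) (n k : ℕ) :
    qShiftedFactorial (q ^ (-(n : ℤ))) q k * (q ^ n) ^ k = qcvP q n k := by
  unfold qcvP qShiftedFactorial
  have h : (q ^ n) ^ k = ∏ i ∈ Finset.range k, q ^ n := by simp
  rw [h, ← Finset.prod_mul_distrib]
  refine Finset.prod_congr rfl fun i _ => ?_
  rw [zpow_neg, zpow_natCast]
  have : q ^ n ≠ 0 := pow_ne_zero _ hq
  field_simp

theorem qsf_succ (a q : ℂ) (k : ℕ) :
    qShiftedFactorial a q (k + 1) = qShiftedFactorial a q k * (1 - a * q ^ k) := by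
  unfold qShiftedFactorial
  rw [Finset.prod_range_succ]

theorem qsf_succ' (a q : ℂ) (k : ℕ) :
    qShiftedFactorial a q (k + 1) = (1 - a) * qShiftedFactorial (a * q) q k := by
  unfold qShiftedFactorial
  rw [Finset.prod_range_succ', mul_comm]
  simp [pow_succ', mul_assoc]

theorem qcv_aux (q : ℂ) (hq : q ≠ 0) (n : ℕ) : ∀ (a b : ℂ), a ≠ 0 →
    (∀ k ≤ n, qShiftedFactorial b q k ≠ 0) →
    (∀ k ≤ n, qShiftedFactorial q q k ≠ 0) →
    ∑ k ∈ Finset.range (n + 1),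
      qcvP q n k / qShiftedFactorial q q k *
        (qShiftedFactorial a q k / qShiftedFactorial b q k * (b / a) ^ k)
      = qShiftedFactorial (b / a) q n / qShiftedFactorial b q n := by
  induction n with
  | zero => intro a b _ _ _; simp [qcvP, qShiftedFactorial]
  | succ n ih =>
    intro a b ha hb hqq
    have hqq' : ∀ k ≤ n, qShiftedFactorial q q k ≠ 0 := fun k hk => hqq k (by omega)
    have hb1 : (1 - b) ≠ 0 := by
      have := hb 1 (by omega)
      rw [qsf_succ'] at this
      exact left_ne_zero_of_mul this
    have hbq : ∀ k ≤ n, qShiftedFactorial (b * q) q k ≠ 0 := by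
      intro k hk
      have := hb (k + 1) (by omega)
      rw [qsf_succ'] at this
      exact right_ne_zero_of_mul this
    have h1 := ih a b ha (fun k hk => hb k (by omega)) hqq'
    have h2 := ih (a * q) (b * q) (mul_ne_zero ha hq) hbq hqq'
    have hc : b * q / (a * q) = b / a := mul_div_mul_right _ _ hq
    rw [hc] at h2
    have key : ∀ k ∈ Finset.range (n + 1),
        qcvP q (n + 1) (k + 1) / qShiftedFactorial q q (k + 1) *
          (qShiftedFactorial a q (k + 1) / qShiftedFactorial b q (k + 1) * (b / a) ^ (k + 1))
        = qcvP q n (k + 1) / qShiftedFactorial q q (k + 1) *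
          (qShiftedFactorial a q (k + 1) / qShiftedFactorial b q (k + 1) * (b / a) ^ (k + 1))
          - q ^ n * (b / a) * ((1 - a) / (1 - b)) * (qcvP q n k / qShiftedFactorial q q k *
        (qShiftedFactorial (a * q) q k / qShiftedFactorial (b * q) q k * (b / a) ^ k)) := by
      intro k hk
      have hk' : k ≤ n := by simpa [Nat.lt_succ_iff] using hk
      have hQ := hqq (k + 1) (by omega)
      have pas : qcvP q (n + 1) (k + 1) / qShiftedFactorial q q (k + 1)
          = qcvP q n (k + 1) / qShiftedFactorial q q (k + 1)
            - q ^ n * (qcvP q n k / qShiftedFactorial q q k) := by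
        rw [qsf_succ] at hQ ⊢
        have e1 := left_ne_zero_of_mul hQ
        have e2 := right_ne_zero_of_mul hQ
        rw [qcvP_shift, qcvP_succ]
        rw [← mul_div_mul_right (qcvP q n k) _ e2, ← mul_div_assoc, ← sub_div]
        congr 1
        ring
      rw [pas, qsf_succ' a, qsf_succ' b, mul_div_mul_comm]
      ring
    rw [Finset.sum_range_succ', Finset.sum_congr rfl key, Finset.sum_sub_distrib,
      ← Finset.mul_sum, h2]
    have hz : qcvP q n (n + 1) = 0 := by rw [qcvP_succ]; simp
    have h3 := Finset.sum_range_succ' (fun k => qcvP q n k / qShiftedFactorial q q k *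
        (qShiftedFactorial a q k / qShiftedFactorial b q k * (b / a) ^ k)) (n + 1)
    rw [Finset.sum_range_succ, h1, hz] at h3
    have h4 : qcvP q (n + 1) 0 = qcvP q n 0 := by simp [qcvP]
    rw [h4, sub_add_eq_add_sub, ← h3, zero_div, zero_mul, add_zero]
    have hB := hb (n + 1) le_rfl
    have hBn := hb n (by omega)
    have e5 : (1 - b * q ^ n) ≠ 0 := by
      rw [qsf_succ] at hB
      exact right_ne_zero_of_mul hB
    have e6 : qShiftedFactorial b q n * (1 - b * q ^ n)
        = (1 - b) * qShiftedFactorial (b * q) q n := by rw [← qsf_succ, qsf_succ']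
    have e7 : qShiftedFactorial (b / a) q n / qShiftedFactorial b q n
        = qShiftedFactorial (b / a) q n * (1 - b * q ^ n) / qShiftedFactorial b q (n + 1) := by
      rw [qsf_succ b, mul_div_mul_right _ _ e5]
    have e8 : q ^ n * (b / a) * ((1 - a) / (1 - b)) *
        (qShiftedFactorial (b / a) q n / qShiftedFactorial (b * q) q n)
        = q ^ n * (b / a) * (1 - a) * qShiftedFactorial (b / a) q n
          / qShiftedFactorial b q (n + 1) := by
      rw [qsf_succ' b, ← mul_div_assoc (q ^ n * (b / a)), div_mul_div_comm]
    rw [e7, e8, ← sub_div, qsf_succ (b / a)]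
    congr 1
    field_simp
    ring

/-- A q-analog of the Chu–Vandermonde sum (Gasper–Rahman (1.5.2)):
`∑_{k=0}^{n} (a;q)_k (q^{−n};q)_k / ((b;q)_k (q;q)_k) · (bq^n/a)^k = (b/a;q)_n / (b;q)_n`. -/
theorem q_chu_vandermonde (n : ℕ) (q a b : ℂ) (ha : a ≠ 0) (hq : q ≠ 0)
    (hb : ∀ k ≤ n, qShiftedFactorial b q k ≠ 0)
    (hqq : ∀ k ≤ n, qShiftedFactorial q q k ≠ 0) :
    ∑ k ∈ Finset.range (n + 1),
      (qShiftedFactorial a q k * qShiftedFactorial (q ^ (-(n : ℤ))) q k) /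
        (qShiftedFactorial b q k * qShiftedFactorial q q k) * (b * q ^ n / a) ^ k
      = qShiftedFactorial (b / a) q n / qShiftedFactorial b q n := by
  rw [← qcv_aux q hq n a b ha hb hqq]
  refine Finset.sum_congr rfl fun k _ => ?_
  rw [← qcv_eq q hq, mul_div_right_comm b, mul_pow, mul_div_mul_comm]
  ring
end

section
/- Let n be a natural number and let (a_k) and (b_k) be sequences of complex numbers such that a_0 − b_0 ≠ 0 and (1−a_k)·b_k ≠ 0 for 1 ≤ k ≤ n, and a_0 ≠ 0, 1−b_0 ≠ 0. Then ∑_{k=0}^{n} ((a_k − b_k)/(a_0 − b_0)) · (∏_{j=0}^{k−1} (1−b_j)a_j) / (∏_{j=1}^{k} (1−a_j)b_j) = ((1−b_0)a_0/(a_0 − b_0)) · ( ∏_{j=1}^{n} ((1−b_j)a_j)/((1−a_j)b_j) − ((1−a_0)b_0)/((1−b_0)a_0) ). -/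
/-- An extension of Ramanujan's identity (generalized hypergeometric series):
follows from Euler's Telescoping Lemma applied to
`(1−b_k)a_k − (1−a_k)b_k = a_k − b_k`. -/
theorem generalized_chu_vandermonde (n : ℕ) (a b : ℕ → ℂ)
    (h0 : a 0 - b 0 ≠ 0)
    (hk : ∀ k, 1 ≤ k → k ≤ n → (1 - a k) * b k ≠ 0)
    (ha0 : a 0 ≠ 0) (hb0 : 1 - b 0 ≠ 0) :
    ∑ k ∈ Finset.range (n + 1),
      ((a k - b k) / (a 0 - b 0)) *
        (∏ j ∈ Finset.range k, (1 - b j) * a j) /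
          (∏ j ∈ Finset.Icc 1 k, (1 - a j) * b j)
      = ((1 - b 0) * a 0 / (a 0 - b 0)) *
          ((∏ j ∈ Finset.Icc 1 n, ((1 - b j) * a j) / ((1 - a j) * b j)) -
            ((1 - a 0) * b 0) / ((1 - b 0) * a 0)) := by
  have hP : ∀ m, ∏ j ∈ Finset.range (m + 1), (1 - b j) * a j
      = ((1 - b 0) * a 0) * ∏ j ∈ Finset.Icc 1 m, (1 - b j) * a j := by
    intro m
    induction m with
    | zero => simp
    | succ m ih =>
      rw [Finset.prod_range_succ, ih, Finset.prod_Icc_succ_top (by omega)]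
      ring
  induction n with
  | zero =>
    simp only [zero_add, Finset.sum_range_one, Finset.range_zero, Finset.prod_empty]
    have : Finset.Icc 1 0 = (∅ : Finset ℕ) := by simp
    rw [this, Finset.prod_empty, Finset.prod_empty]
    field_simp
    ring
  | succ n ih =>
    have hq := hk (n + 1) (by omega) le_rfl
    have hQ : ∏ j ∈ Finset.Icc 1 n, (1 - a j) * b j ≠ 0 := by
      rw [Finset.prod_ne_zero_iff]
      intro j hj
      rw [Finset.mem_Icc] at hj
      exact hk j hj.1 (by omega)
    rw [Finset.sum_range_succ, ih (fun k h1 h2 => hk k h1 (by omega)), hP,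
      Finset.prod_Icc_succ_top (by omega), Finset.prod_Icc_succ_top (by omega),
      Finset.prod_div_distrib]
    have hd : a (n + 1) - b (n + 1)
      = (1 - b (n + 1)) * a (n + 1) - (1 - a (n + 1)) * b (n + 1) := by ring
    rw [hd]
    generalize (1 - a (n + 1)) * b (n + 1) = q at *
    generalize (1 - b (n + 1)) * a (n + 1) = p at *
    generalize ∏ j ∈ Finset.Icc 1 n, (1 - a j) * b j = Q at *
    generalize ∏ j ∈ Finset.Icc 1 n, (1 - b j) * a j = P at *
    generalize (1 - a 0) * b 0 / ((1 - b 0) * a 0) = r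
    field_simp
    ring
end

section
/- Let n be a natural number and let (a_k), (b_k), (c_k) be sequences of complex numbers such that (a_0−b_0)(a_0−c_0) ≠ 0, (1−b_0)(1−c_0)a_0 ≠ 0, and (1−a_k)(a_k − b_k c_k) ≠ 0 for 1 ≤ k ≤ n. Then ∑_{k=0}^{n} ((a_k−b_k)(a_k−c_k))/((a_0−b_0)(a_0−c_0)) · (∏_{j=0}^{k−1} (1−b_j)(1−c_j)a_j) / (∏_{j=1}^{k} (1−a_j)(a_j − b_j c_j)) = ((1−b_0)(1−c_0)a_0)/((a_0−b_0)(a_0−c_0)) · ( ∏_{j=1}^{n} ((1−b_j)(1−c_j)a_j)/((1−a_j)(a_j−b_j c_j)) − ((1−a_0)(a_0−b_0 c_0))/((1−b_0)(1−c_0)a_0) ). -/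
theorem telescoping_aux (n : ℕ) (u v : ℕ → ℂ) (D : ℂ) (hD : D ≠ 0) (hu0 : u 0 ≠ 0)
    (hk : ∀ k, 1 ≤ k → k ≤ n → v k ≠ 0) :
    ∑ k ∈ Finset.range (n + 1),
      (u k - v k) / D * (∏ j ∈ Finset.range k, u j) / (∏ j ∈ Finset.Icc 1 k, v j)
      = u 0 / D * ((∏ j ∈ Finset.Icc 1 n, u j / v j) - v 0 / u 0) := by
  induction n with
  | zero =>
    simp
    field_simp
  | succ n ih =>
    have hU : ∀ m : ℕ, ∏ j ∈ Finset.range (m + 1), u j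
        = u 0 * ∏ j ∈ Finset.Icc 1 m, u j := by
      intro m
      induction m with
      | zero => simp
      | succ m ihm =>
        rw [Finset.prod_range_succ, ihm, Finset.prod_Icc_succ_top (by omega), mul_assoc]
    have hV : ∏ j ∈ Finset.Icc 1 n, v j ≠ 0 := by
      rw [Finset.prod_ne_zero_iff]
      intro j hj
      rw [Finset.mem_Icc] at hj
      exact hk j hj.1 (by omega)
    have hv : v (n + 1) ≠ 0 := hk (n + 1) (by omega) le_rfl
    rw [Finset.sum_range_succ, ih (fun k h1 h2 => hk k h1 (by omega)), hU,
      Finset.prod_Icc_succ_top (by omega), Finset.prod_Icc_succ_top (by omega),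
      Finset.prod_div_distrib]
    field_simp
    ring

/-- Macdonald's generalized hypergeometric identity obtained from Euler's
Telescoping Lemma and the elementary relation
`(1−b)(1−c)a − (1−a)(a−bc) = (a−b)(a−c)`. -/
theorem macdonald_pfaff_saalschutz (n : ℕ) (a b c : ℕ → ℂ)
    (h0 : (a 0 - b 0) * (a 0 - c 0) ≠ 0)
    (hu0 : (1 - b 0) * (1 - c 0) * a 0 ≠ 0)
    (hk : ∀ k, 1 ≤ k → k ≤ n → (1 - a k) * (a k - b k * c k) ≠ 0) :
    ∑ k ∈ Finset.range (n + 1),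
      ((a k - b k) * (a k - c k)) / ((a 0 - b 0) * (a 0 - c 0)) *
        (∏ j ∈ Finset.range k, (1 - b j) * (1 - c j) * a j) /
          (∏ j ∈ Finset.Icc 1 k, (1 - a j) * (a j - b j * c j))
      = ((1 - b 0) * (1 - c 0) * a 0) / ((a 0 - b 0) * (a 0 - c 0)) *
          ((∏ j ∈ Finset.Icc 1 n,
              ((1 - b j) * (1 - c j) * a j) / ((1 - a j) * (a j - b j * c j))) -
            ((1 - a 0) * (a 0 - b 0 * c 0)) / ((1 - b 0) * (1 - c 0) * a 0)) := by
  have h := telescoping_aux n (fun k => (1 - b k) * (1 - c k) * a k)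
    (fun k => (1 - a k) * (a k - b k * c k)) ((a 0 - b 0) * (a 0 - c 0)) h0 hu0 hk
  rw [← h]
  refine Finset.sum_congr rfl fun k _ => ?_
  have e : (a k - b k) * (a k - c k)
      = (1 - b k) * (1 - c k) * a k - (1 - a k) * (a k - b k * c k) := by ring
  rw [e]
end

section
/- Let n be a natural number and let (a_k), (b_k), (c_k), (d_k) be sequences of complex numbers such that (a_0−b_0)(a_0−c_0)(a_0−d_0)(a_0−b_0c_0d_0) ≠ 0, (1−b_0)(1−c_0)(1−d_0)(a_0²−b_0c_0d_0)a_0 ≠ 0, and (1−a_k)(a_k−b_k c_k)(a_k−b_k d_k)(a_k−c_k d_k) ≠ 0 for 1 ≤ k ≤ n. Then ∑_{k=0}^{n} ((a_k−b_k)(a_k−c_k)(a_k−d_k)(a_k−b_k c_k d_k))/((a_0−b_0)(a_0−c_0)(a_0−d_0)(a_0−b_0c_0d_0)) · (∏_{j=0}^{k−1} (1−b_j)(1−c_j)(1−d_j)(a_j²−b_j c_j d_j)a_j) / (∏_{j=1}^{k} (1−a_j)(a_j−b_j c_j)(a_j−b_j d_j)(a_j−c_j d_j)) = ((1−b_0)(1−c_0)(1−d_0)(a_0²−b_0c_0d_0)a_0)/((a_0−b_0)(a_0−c_0)(a_0−d_0)(a_0−b_0c_0d_0))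 · ( ∏_{j=1}^{n} ((1−b_j)(1−c_j)(1−d_j)(a_j²−b_j c_j d_j)a_j)/((1−a_j)(a_j−b_j c_j)(a_j−b_j d_j)(a_j−c_j d_j)) − ((1−a_0)(a_0−b_0 c_0)(a_0−b_0 d_0)(a_0−c_0 d_0))/((1−b_0)(1−c_0)(1−d_0)(a_0²−b_0c_0d_0)a_0) ). -/
/-- Euler's telescoping lemma, unnormalised form. -/
theorem euler_telescope_aux (t u v : ℕ → ℂ) (htuv : ∀ k, t k = u k - v k) (h0 : t 0 ≠ 0)
    (n : ℕ) (hv : ∀ k, 1 ≤ k → k ≤ n → v k ≠ 0) :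
    ∑ k ∈ Finset.range (n + 1),
      t k / t 0 * (∏ j ∈ Finset.range k, u j) / (∏ j ∈ Finset.Icc 1 k, v j)
      = (u 0 * (∏ j ∈ Finset.Icc 1 n, u j / v j) - v 0) / t 0 ∧
    ∏ j ∈ Finset.range (n + 1), u j = u 0 * ∏ j ∈ Finset.Icc 1 n, u j := by
  induction n with
  | zero => simp [← htuv]
  | succ m ih =>
    obtain ⟨ih1, ih2⟩ := ih (fun k h1 h2 => hv k h1 (by omega))
    have hm : v (m + 1) ≠ 0 := hv (m + 1) (by omega) le_rfl
    have hQ : ∏ j ∈ Finset.Icc 1 m, v j ≠ 0 := by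
      refine Finset.prod_ne_zero_iff.mpr fun j hj => ?_
      rw [Finset.mem_Icc] at hj
      exact hv j hj.1 (by omega)
    constructor
    · rw [Finset.sum_range_succ, ih1, ih2, Finset.prod_Icc_succ_top (by omega),
        Finset.prod_Icc_succ_top (by omega), Finset.prod_div_distrib, htuv (m + 1)]
      field_simp
      ring
    · rw [Finset.prod_range_succ, ih2, Finset.prod_Icc_succ_top (by omega), mul_assoc]

/-- Macdonald's generalized hypergeometric identity obtained from Euler's
Telescoping Lemma and the elementary relation
`(1−b)(1−c)(1−d)(a²−bcd)a − (1−a)(a−bc)(a−bd)(a−cd) = (a−b)(a−c)(a−d)(a−bcd)`. -/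
theorem macdonald_q_dougall (n : ℕ) (a b c d : ℕ → ℂ)
    (h0 : (a 0 - b 0) * (a 0 - c 0) * (a 0 - d 0) * (a 0 - b 0 * c 0 * d 0) ≠ 0)
    (hu0 : (1 - b 0) * (1 - c 0) * (1 - d 0) * ((a 0) ^ 2 - b 0 * c 0 * d 0) * a 0 ≠ 0)
    (hk : ∀ k, 1 ≤ k → k ≤ n →
      (1 - a k) * (a k - b k * c k) * (a k - b k * d k) * (a k - c k * d k) ≠ 0) :
    ∑ k ∈ Finset.range (n + 1),
      ((a k - b k) * (a k - c k) * (a k - d k) * (a k - b k * c k * d k)) /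
          ((a 0 - b 0) * (a 0 - c 0) * (a 0 - d 0) * (a 0 - b 0 * c 0 * d 0)) *
        (∏ j ∈ Finset.range k,
            (1 - b j) * (1 - c j) * (1 - d j) * ((a j) ^ 2 - b j * c j * d j) * a j) /
          (∏ j ∈ Finset.Icc 1 k,
            (1 - a j) * (a j - b j * c j) * (a j - b j * d j) * (a j - c j * d j))
      = ((1 - b 0) * (1 - c 0) * (1 - d 0) * ((a 0) ^ 2 - b 0 * c 0 * d 0) * a 0) /
            ((a 0 - b 0) * (a 0 - c 0) * (a 0 - d 0) * (a 0 - b 0 * c 0 * d 0)) *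
          ((∏ j ∈ Finset.Icc 1 n,
              ((1 - b j) * (1 - c j) * (1 - d j) * ((a j) ^ 2 - b j * c j * d j) * a j) /
                ((1 - a j) * (a j - b j * c j) * (a j - b j * d j) * (a j - c j * d j))) -
            ((1 - a 0) * (a 0 - b 0 * c 0) * (a 0 - b 0 * d 0) * (a 0 - c 0 * d 0)) /
              ((1 - b 0) * (1 - c 0) * (1 - d 0) * ((a 0) ^ 2 - b 0 * c 0 * d 0) * a 0)) := by
  have h := (euler_telescope_aux
    (fun k => (a k - b k) * (a k - c k) * (a k - d k) * (a k - b k * c k * d k))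
    (fun j => (1 - b j) * (1 - c j) * (1 - d j) * ((a j) ^ 2 - b j * c j * d j) * a j)
    (fun j => (1 - a j) * (a j - b j * c j) * (a j - b j * d j) * (a j - c j * d j))
    (fun k => by ring) h0 n hk).1
  refine h.trans ?_
  have key : ∀ U V T P : ℂ, U ≠ 0 → (U * P - V) / T = U / T * (P - V / U) := by
    intro U V T P hU
    rw [div_mul_eq_mul_div, mul_sub, mul_div_cancel₀ _ hU]
  exact key _ _ _ _ hu0
end

section
/- Let (a_n) and (b_n) be sequences of complex numbers with a_n ≠ 0 and b_n ≠ 0 for all n, and let (x_n) satisfy x_{n+2} = a_n x_{n+1} + b_n x_n for all n ≥ 0, with x_2 ≠ 0. Then for every natural number n, ∑_{k=1}^{n} (b_k / (a_1 a_2 ⋯ a_k)) · (x_k / x_2) = x_{n+2} / (a_1 a_2 ⋯ a_n · x_2) − 1. -/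
/-- Identity (33) of the Theorem on three-term recurrence relations
(generalizing Lucas's `∑_{k=1}^n F_k = F_{n+2} − 1`):
`∑_{k=1}^{n} (b_k/(a_1⋯a_k))·(x_k/x_2) = x_{n+2}/(a_1⋯a_n · x_2) − 1`. -/
theorem three_term_sum (a b x : ℕ → ℂ)
    (ha : ∀ k, a k ≠ 0) (hb : ∀ k, b k ≠ 0)
    (hrec : ∀ m, x (m + 2) = a m * x (m + 1) + b m * x m)
    (hx2 : x 2 ≠ 0) (n : ℕ) :
    ∑ k ∈ Finset.Icc 1 n, (b k / (∏ j ∈ Finset.Icc 1 k, a j)) * (x k / x 2)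
      = x (n + 2) / ((∏ j ∈ Finset.Icc 1 n, a j) * x 2) - 1 := by
  induction n with
  | zero => simp [hx2]
  | succ n ih =>
    have hP : (∏ j ∈ Finset.Icc 1 n, a j) ≠ 0 := Finset.prod_ne_zero_iff.mpr fun j _ => ha j
    have h1 := ha (n + 1)
    rw [Finset.sum_Icc_succ_top (by omega), ih, Finset.prod_Icc_succ_top (by omega),
      hrec (n + 1)]
    generalize (∏ j ∈ Finset.Icc 1 n, a j) = P at *
    have e : n + 1 + 1 = n + 2 := rfl
    rw [e]
    field_simp
    ring
end

section
/- Let (a_n) and (b_n) be sequences of complex numbers with a_n ≠ 0 and b_n ≠ 0 for all n, and let (x_n) satisfy x_{n+2} = a_n x_{n+1} + b_n x_n for all n ≥ 0, with x_1 ≠ 0 and x_2 ≠ 0. Then for every natural number n, ∑_{k=1}^{n} (a_k / (b_1 b_2 ⋯ b_k)) · (x_{k+1}² / (x_1 x_2)) = x_{n+1} x_{n+2} / (b_1 b_2 ⋯ b_n · x_1 x_2) − 1. -/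
/-- Identity (36) of the Theorem on three-term recurrence relations
(generalizing the Fibonacci identity `∑_{k=1}^n F_k² = F_n F_{n+1}`):
`∑_{k=1}^{n} (a_k/(b_1⋯b_k))·(x_{k+1}²/(x_1 x_2)) = x_{n+1}x_{n+2}/(b_1⋯b_n · x_1 x_2) − 1`. -/
theorem three_term_sum_of_squares (a b x : ℕ → ℂ)
    (ha : ∀ k, a k ≠ 0) (hb : ∀ k, b k ≠ 0)
    (hrec : ∀ m, x (m + 2) = a m * x (m + 1) + b m * x m)
    (hx1 : x 1 ≠ 0) (hx2 : x 2 ≠ 0) (n : ℕ) :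
    ∑ k ∈ Finset.Icc 1 n,
      (a k / (∏ j ∈ Finset.Icc 1 k, b j)) * ((x (k + 1)) ^ 2 / (x 1 * x 2))
      = x (n + 1) * x (n + 2) / ((∏ j ∈ Finset.Icc 1 n, b j) * (x 1 * x 2)) - 1 := by
  induction n with
  | zero => simp [hx1, hx2]
  | succ n ih =>
    have hP : (∏ j ∈ Finset.Icc 1 n, b j) ≠ 0 := Finset.prod_ne_zero_iff.mpr fun j _ => hb j
    have hbn := hb (n + 1)
    have h3 : x (n + 1 + 2) = a (n + 1) * x (n + 2) + b (n + 1) * x (n + 1) := hrec (n + 1)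
    have h2 : x (n + 1 + 1) = x (n + 2) := rfl
    rw [Finset.sum_Icc_succ_top (by omega), ih, Finset.prod_Icc_succ_top (by omega), h3, h2]
    generalize (∏ j ∈ Finset.Icc 1 n, b j) = P at *
    field_simp
    ring
end
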